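/- Let 0 < a_1 < a_2 and assume that g(r;a_i) > 0 for all r ∈ (0,∞) and i = 1,2. Define the Wronskian W(r) = g'(r;a_1)·g(r;a_2) - g(r;a_1)·g'(r;a_2). Then for every r > 0, W(r) = (1/ρ(r)) · ∫₀^r ρ(s) · (g(s;a_2)^{(2-p)/(p-1)} - g(s;a_1)^{(2-p)/(p-1)}) · g(s;a_1) · g(s;a_2) ds. -/

import Mathlib

/-!
The ODE is linear in `f` and `g` apart from the relation between `f'` and `g`: where `g > 0` one has
`f' < 0`, hence `|f'|^{p-1} = g`, so the equation reads `g' + ((N-1)/r) g + g = f`, that is,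
`(ρ g)' = ρ f`. Therefore `ρ W = f₁ (ρ g₂) - f₂ (ρ g₁)`. Differentiating the right-hand side, the
terms `± ρ f₁ f₂` cancel and `(ρ W)' = ρ (f₁' g₂ - f₂' g₁)` remains. Since
`f' = -g^{1/(p-1)} = -g^{(2-p)/(p-1)} g`, this is the integrand of the theorem, and integrating from
`0`, where `ρ` vanishes because `N ≥ 2`, gives the formula. The integrand is continuous on `[0, r]`
because `f'` and `g` are.
-/

open Real Set Filter MeasureTheory

/-- `f` is a solution of the profile equation with parameter `a`:
`f` is C¹ on `[0,∞)` with derivative `f'`, the map `r ↦ |f'(r)|^{p-2} f'(r)` is C¹ on `[0,∞)`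
with derivative `F'`, the ODE
`(|f'|^{p-2}f')'(r) + ((N-1)/r)(|f'|^{p-2}f')(r) + f(r) - |f'(r)|^{p-1} = 0` holds for `r > 0`,
and `f 0 = a`, `f' 0 = 0`. -/
def IsProfileSol (N : ℕ) (p a : ℝ) (f f' F' : ℝ → ℝ) : Prop :=
  (∀ r ∈ Ici (0:ℝ), HasDerivWithinAt f (f' r) (Ici 0) r) ∧
  ContinuousOn f' (Ici 0) ∧
  (∀ r ∈ Ici (0:ℝ), HasDerivWithinAt (fun s => |f' s| ^ (p - 2) * f' s) (F' r) (Ici 0) r) ∧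
  ContinuousOn F' (Ici 0) ∧
  (∀ r, 0 < r →
    F' r + (((N : ℝ) - 1) / r) * (|f' r| ^ (p - 2) * f' r) + f r - |f' r| ^ (p - 1) = 0) ∧
  f 0 = a ∧ f' 0 = 0

/-- `g(r;a) = -|f'(r;a)|^{p-2} f'(r;a)`. -/
noncomputable def gFun (p : ℝ) (f' : ℝ → ℝ) (r : ℝ) : ℝ := -(|f' r| ^ (p - 2) * f' r)

/-- `ρ(r) = r^{N-1} e^r`. -/
noncomputable def rho (N : ℕ) (r : ℝ) : ℝ := r ^ (N - 1) * Real.exp r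

/-- the derivative of `ρ`. -/
noncomputable def rho' (N : ℕ) (r : ℝ) : ℝ :=
  (((N : ℝ) - 1) * r ^ (N - 2) + r ^ (N - 1)) * Real.exp r

/-- `w(r;a) = ρ(r) g(r;a)`. -/
noncomputable def wFun (N : ℕ) (p : ℝ) (f' : ℝ → ℝ) (r : ℝ) : ℝ := rho N r * gFun p f' r

/-- the derivative `w'(r;a) = ρ'(r) g(r;a) + ρ(r) g'(r;a)`, where `g' = -F'`. -/
noncomputable def wDeriv (N : ℕ) (p : ℝ) (f' F' : ℝ → ℝ) (r : ℝ) : ℝ :=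
  rho' N r * gFun p f' r - rho N r * F' r

lemma rho_zero {N : ℕ} (hN : 2 ≤ N) : rho N 0 = 0 := by
  have h : N - 1 ≠ 0 := by omega
  simp [rho, h]

lemma rho_pos (N : ℕ) {r : ℝ} (hr : 0 < r) : 0 < rho N r := by
  unfold rho; positivity

lemma continuous_rho (N : ℕ) : Continuous (rho N) := by
  unfold rho; fun_prop

lemma hasDerivAt_rho {N : ℕ} (hN : 2 ≤ N) {r : ℝ} (hr : 0 < r) :
    HasDerivAt (rho N) (rho N r * (((N : ℝ) - 1) / r + 1)) r := by
  obtain ⟨m, rfl⟩ : ∃ m, N = m + 2 := ⟨N - 2, by omega⟩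
  have h := (hasDerivAt_pow (m + 1) r).mul (Real.hasDerivAt_exp r)
  refine h.congr_deriv ?_
  simp only [rho, show m + 2 - 1 = m + 1 by omega, Nat.add_sub_cancel]
  push_cast
  field_simp
  ring

lemma gFun_pos_imp_neg {p : ℝ} {f' : ℝ → ℝ} {r : ℝ} (h : 0 < gFun p f' r) : f' r < 0 := by
  by_contra! h0
  have : 0 ≤ |f' r| ^ (p - 2) * f' r := by positivity
  unfold gFun at h
  linarith

lemma gFun_eq_rpow {p : ℝ} {f' : ℝ → ℝ} {r : ℝ} (h : 0 < gFun p f' r) :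
    gFun p f' r = |f' r| ^ (p - 1) := by
  have hneg := gFun_pos_imp_neg h
  have hpos : 0 < |f' r| := abs_pos.2 hneg.ne
  rw [show p - 1 = (p - 2) + 1 by ring, Real.rpow_add_one hpos.ne']
  unfold gFun
  rw [abs_of_neg hneg]
  ring

/-- Inverting `g = |f'|^{p-1}` gives `f' = -g^{1/(p-1)}`, written with the exponent split as
`1/(p-1) = (2-p)/(p-1) + 1`. -/
lemma deriv_eq_neg_gFun {p : ℝ} (hp : 1 < p) {f' : ℝ → ℝ} {r : ℝ} (h : 0 < gFun p f' r) :
    f' r = -(gFun p f' r ^ ((2 - p) / (p - 1)) * gFun p f' r) := by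
  have hneg := gFun_pos_imp_neg h
  have hp' : p - 1 ≠ 0 := by linarith
  rw [← Real.rpow_add_one h.ne', gFun_eq_rpow h, ← Real.rpow_mul (abs_nonneg _),
    show (p - 1) * ((2 - p) / (p - 1) + 1) = 1 by field_simp; ring, Real.rpow_one,
    abs_of_neg hneg]
  ring

section Solution

variable {N : ℕ} {p a : ℝ} {f f' F' : ℝ → ℝ}

lemma IsProfileSol.hasDerivAt_f (hf : IsProfileSol N p a f f' F') {r : ℝ} (hr : 0 < r) :
    HasDerivAt f (f' r) r :=
  (hf.1 r hr.le).hasDerivAt (Ici_mem_nhds hr)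

lemma IsProfileSol.hasDerivAt_gFun (hf : IsProfileSol N p a f f' F') {r : ℝ} (hr : 0 < r) :
    HasDerivAt (gFun p f') (-F' r) r :=
  ((hf.2.2.1 r hr.le).hasDerivAt (Ici_mem_nhds hr)).neg

lemma IsProfileSol.continuousOn_f (hf : IsProfileSol N p a f f' F') : ContinuousOn f (Ici 0) :=
  fun r hr => (hf.1 r hr).continuousWithinAt

lemma IsProfileSol.continuousOn_gFun (hf : IsProfileSol N p a f f' F') :
    ContinuousOn (gFun p f') (Ici 0) :=
  fun r hr => (hf.2.2.1 r hr).continuousWithinAt.neg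

/-- The profile equation in terms of `g`: `g' = f - ((N-1)/r + 1) g`, with `g' = -F'`. -/
lemma IsProfileSol.neg_F'_eq (hf : IsProfileSol N p a f f' F') {r : ℝ} (hr : 0 < r)
    (hg : 0 < gFun p f' r) : -F' r = f r - (((N : ℝ) - 1) / r + 1) * gFun p f' r := by
  have h := hf.2.2.2.2.1 r hr
  rw [← gFun_eq_rpow hg, show |f' r| ^ (p - 2) * f' r = -gFun p f' r by simp [gFun]] at h
  linarith

/-- `(ρ g)' = ρ f`. -/
lemma IsProfileSol.hasDerivAt_wFun (hN : 2 ≤ N) (hf : IsProfileSol N p a f f' F') {r : ℝ}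
    (hr : 0 < r) (hg : 0 < gFun p f' r) : HasDerivAt (wFun N p f') (rho N r * f r) r := by
  refine ((hasDerivAt_rho hN hr).mul (hf.hasDerivAt_gFun hr)).congr_deriv ?_
  rw [hf.neg_F'_eq hr hg]
  ring

lemma IsProfileSol.continuousOn_wFun (hf : IsProfileSol N p a f f' F') :
    ContinuousOn (wFun N p f') (Ici 0) :=
  (continuous_rho N).continuousOn.mul hf.continuousOn_gFun

end Solution

/-- the Wronskian `W = g₁' g₂ - g₁ g₂'` (with `gᵢ' = -Fᵢ'`) satisfies
`W(r) = (1/ρ(r)) ∫₀ʳ ρ(s)(g₂(s)^{(2-p)/(p-1)} - g₁(s)^{(2-p)/(p-1)}) g₁(s) g₂(s) ds`. -/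
theorem stmt17 (N : ℕ) (hN : 2 ≤ N) (p : ℝ)
    (hp1 : 2 * (N : ℝ) / ((N : ℝ) + 1) < p) (hp2 : p < 2)
    (a₁ a₂ : ℝ) (ha₁ : 0 < a₁) (ha₁₂ : a₁ < a₂)
    (f₁ f₁' F₁' f₂ f₂' F₂' : ℝ → ℝ)
    (hf₁ : IsProfileSol N p a₁ f₁ f₁' F₁') (hf₂ : IsProfileSol N p a₂ f₂ f₂' F₂')
    (hg₁ : ∀ r, 0 < r → 0 < gFun p f₁' r) (hg₂ : ∀ r, 0 < r → 0 < gFun p f₂' r) :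
    ∀ r, 0 < r →
      (-(F₁' r)) * gFun p f₂' r - gFun p f₁' r * (-(F₂' r)) =
        (1 / rho N r) * ∫ s in (0:ℝ)..r,
          rho N s * (gFun p f₂' s ^ ((2 - p) / (p - 1)) - gFun p f₁' s ^ ((2 - p) / (p - 1)))
            * gFun p f₁' s * gFun p f₂' s := by
  intro r hr
  have hp : 1 < p := by
    have hN' : (2 : ℝ) ≤ N := by exact_mod_cast hN
    refine lt_trans ?_ hp1
    rw [lt_div_iff₀ (by linarith)]
    linarith
  have hsub : Icc 0 r ⊆ Ici (0 : ℝ) := Icc_subset_Ici_self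
  have hderiv : ∀ s ∈ Ioo 0 r, HasDerivAt
      (fun s => f₁ s * wFun N p f₂' s - f₂ s * wFun N p f₁' s)
      (rho N s * (f₁' s * gFun p f₂' s - f₂' s * gFun p f₁' s)) s := by
    intro s hs
    refine (((hf₁.hasDerivAt_f hs.1).mul (hf₂.hasDerivAt_wFun hN hs.1 (hg₂ s hs.1))).sub
      ((hf₂.hasDerivAt_f hs.1).mul (hf₁.hasDerivAt_wFun hN hs.1 (hg₁ s hs.1)))).congr_deriv ?_
    simp only [wFun]
    ring
  have hcont : ContinuousOn (fun s => f₁ s * wFun N p f₂' s - f₂ s * wFun N p f₁' s)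
      (Icc 0 r) :=
    ((hf₁.continuousOn_f.mul hf₂.continuousOn_wFun).sub
      (hf₂.continuousOn_f.mul hf₁.continuousOn_wFun)).mono hsub
  have hcont' : ContinuousOn
      (fun s => rho N s * (f₁' s * gFun p f₂' s - f₂' s * gFun p f₁' s)) (Icc 0 r) :=
    ((continuous_rho N).continuousOn.mul ((hf₁.2.1.mul hf₂.continuousOn_gFun).sub
      (hf₂.2.1.mul hf₁.continuousOn_gFun))).mono hsub
  have hFTC := intervalIntegral.integral_eq_sub_of_hasDerivAt_of_le hr.le hcont hderiv
    (hcont'.intervalIntegrable_of_Icc hr.le)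
  have hcongr : (∫ s in (0:ℝ)..r,
      rho N s * (gFun p f₂' s ^ ((2 - p) / (p - 1)) - gFun p f₁' s ^ ((2 - p) / (p - 1)))
        * gFun p f₁' s * gFun p f₂' s) =
      ∫ s in (0:ℝ)..r, rho N s * (f₁' s * gFun p f₂' s - f₂' s * gFun p f₁' s) := by
    refine intervalIntegral.integral_congr fun s hs => ?_
    rw [uIcc_of_le hr.le] at hs
    rcases hs.1.eq_or_lt with rfl | hs0
    · simp [rho_zero hN]
    · rw [deriv_eq_neg_gFun hp (hg₁ s hs0), deriv_eq_neg_gFun hp (hg₂ s hs0)]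
      ring
  have hρ := (rho_pos N hr).ne'
  rw [hcongr, hFTC, hf₁.neg_F'_eq hr (hg₁ r hr), hf₂.neg_F'_eq hr (hg₂ r hr)]
  simp only [wFun, rho_zero hN]
  field_simp
  ring
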